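/- Let N ≥ 1, let a > 2 be a real number, and let S be a nonempty finite set of vectors ρ ∈ ℝ^N with all components in [−a/2, a/2]. If ρ* ∈ S satisfies R(ρ*) ≥ R(ρ) for all ρ ∈ S, then r(ρ*) ≤ r(ρ) for all ρ ∈ S. (Maximizing the rank-preserving reward over a finite set of robustness vectors selects a vector of minimal rank, so planning with R avoids checking all 2^N rule-satisfaction combinations.) -/

import Mathlib

open Finset

/-- The step function: 0 on negative reals, 1 otherwise (real-valued). -/
noncomputable def stp (x : ℝ) : ℝ := if x < 0 then 0 else 1

/-- The step function with natural-number values. -/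
noncomputable def stepNat (x : ℝ) : ℕ := if x < 0 then 0 else 1

/-- The rank of a robustness vector `ρ ∈ ℝ^N`:
`r(ρ) = 2^N - ∑_{i=1}^N 2^{N-i} step(ρ_i)` (index `i : Fin N` encodes rule `i+1`). -/
noncomputable def rnk {N : ℕ} (ρ : Fin N → ℝ) : ℕ :=
  2 ^ N - ∑ i : Fin N, 2 ^ (N - 1 - (i : ℕ)) * stepNat (ρ i)

/-- The reward `R(ρ) = ∑_{i=1}^N ( a^{N-i+1} step(ρ_i) + ρ_i / N )`
(index `i : Fin N` encodes rule `i+1`, so the exponent is `N - i`). -/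
noncomputable def rwd {N : ℕ} (a : ℝ) (ρ : Fin N → ℝ) : ℝ :=
  ∑ i : Fin N, (a ^ (N - (i : ℕ)) * stp (ρ i) + ρ i / N)

/-! The rank and, up to the average of the components, the reward depend only on the finite set of
exponents `N - i` (numbering the rules from `1`) of the satisfied rules. Comparing
ranks is comparing binary expansions, i.e. comparing these sets colexicographically. Since a power
of `a ≥ 2` exceeds the sum of all lower ones by at least `1`, a colexicographically larger set has a
power sum in base `a` larger by at least `1`, and the reward scales this gap to `a`. The averages
cannot make up for it: they differ by less than `a`, strictly because some rule is satisfied by the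
vector of smaller rank only. -/

section GeomSum

variable {R : Type*} [Semiring R] [PartialOrder R] [IsOrderedRing R] {x : R}

lemma geomSum_range_add_one_le_pow (hx : 2 ≤ x) (n : ℕ) : ∑ k ∈ range n, x ^ k + 1 ≤ x ^ n := by
  have hx₀ : 0 ≤ x := zero_le_two.trans hx
  induction n with
  | zero => simp
  | succ n ih =>
    calc ∑ k ∈ range (n + 1), x ^ k + 1
        = x ^ n + (∑ k ∈ range n, x ^ k + 1) := by rw [sum_range_succ_comm, add_assoc]
      _ ≤ x ^ n + x ^ n := by gcongr
      _ = x ^ n * 2 := (mul_two _).symm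
      _ ≤ x ^ n * x := by gcongr
      _ = x ^ (n + 1) := (pow_succ x n).symm

lemma geomSum_add_one_le_geomSum_of_toColex_lt (hx : 2 ≤ x) {s t : Finset ℕ}
    (hst : toColex s < toColex t) : ∑ k ∈ s, x ^ k + 1 ≤ ∑ k ∈ t, x ^ k := by
  obtain ⟨m, hmt, hms, hm⟩ := Colex.toColex_lt_toColex_iff_exists_forall_lt.1 hst
  have hpow : ∀ k : ℕ, 0 ≤ x ^ k := pow_nonneg (zero_le_two.trans hx)
  have hsub : s \ t ⊆ range m := fun k hk =>
    mem_range.2 (hm k (mem_sdiff.1 hk).1 (mem_sdiff.1 hk).2)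
  calc ∑ k ∈ s, x ^ k + 1
      = ∑ k ∈ s ∩ t, x ^ k + (∑ k ∈ s \ t, x ^ k + 1) := by
        rw [← add_assoc, sum_inter_add_sum_sdiff]
    _ ≤ ∑ k ∈ s ∩ t, x ^ k + (∑ k ∈ range m, x ^ k + 1) := by
        gcongr
        exact fun k _ _ => hpow k
    _ ≤ ∑ k ∈ s ∩ t, x ^ k + x ^ m := by
        gcongr
        exact geomSum_range_add_one_le_pow hx m
    _ ≤ ∑ k ∈ t ∩ s, x ^ k + ∑ k ∈ t \ s, x ^ k := by
        rw [inter_comm]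
        gcongr
        exact single_le_sum (fun k _ => hpow k) (mem_sdiff.2 ⟨hmt, hms⟩)
    _ = ∑ k ∈ t, x ^ k := sum_inter_add_sum_sdiff t s _

end GeomSum

section Robustness

open scoped BigOperators

variable {N : ℕ} {ρ ρ' : Fin N → ℝ}

/-- The exponents of `2` that the satisfied rules contribute to the rank: the rule with index
`i : Fin N` is satisfied when `0 ≤ ρ i`, and its exponent is `N - 1 - i`, the value of `i.rev`. -/
noncomputable def satisfiedExponents (ρ : Fin N → ℝ) : Finset ℕ :=
  ({i | 0 ≤ ρ i} : Finset (Fin N)).map (Fin.revPerm.toEmbedding.trans Fin.valEmbedding)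

lemma sum_satisfiedExponents {M : Type*} [AddCommMonoid M] (ρ : Fin N → ℝ) (f : ℕ → M) :
    ∑ k ∈ satisfiedExponents ρ, f k = ∑ i : Fin N, if 0 ≤ ρ i then f i.rev else 0 := by
  simp [satisfiedExponents, sum_filter]

lemma satisfiedExponents_subset (h : ∀ i, 0 ≤ ρ i → 0 ≤ ρ' i) :
    satisfiedExponents ρ ⊆ satisfiedExponents ρ' :=
  map_subset_map.2 (monotone_filter_right univ fun i _ => h i)

lemma rnk_eq_two_pow_sub_sum (ρ : Fin N → ℝ) :
    rnk ρ = 2 ^ N - ∑ k ∈ satisfiedExponents ρ, 2 ^ k := by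
  rw [rnk, sum_satisfiedExponents]
  congr 1
  refine sum_congr rfl fun i _ => ?_
  have hexp : N - 1 - (i : ℕ) = i.rev := by rw [Fin.val_rev]; lia
  rw [hexp, stepNat, mul_ite, mul_zero, mul_one, ← ite_not]
  simp only [not_lt]

lemma rwd_eq_mul_sum_add_expect (a : ℝ) (ρ : Fin N → ℝ) :
    rwd a ρ = a * ∑ k ∈ satisfiedExponents ρ, a ^ k + 𝔼 i, ρ i := by
  rw [rwd, sum_add_distrib, ← sum_div, Fintype.expect_eq_sum_div_card, Fintype.card_fin,
    sum_satisfiedExponents, mul_sum]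
  congr 1
  refine sum_congr rfl fun i _ => ?_
  have hexp : N - (i : ℕ) = i.rev + 1 := by rw [Fin.val_rev]; lia
  rw [hexp, pow_succ', stp, mul_ite, mul_zero, mul_one, mul_ite, mul_zero, ← ite_not]
  simp only [not_lt]

lemma toColex_satisfiedExponents_lt_of_rnk_lt (h : rnk ρ < rnk ρ') :
    toColex (satisfiedExponents ρ') < toColex (satisfiedExponents ρ) := by
  rw [rnk_eq_two_pow_sub_sum, rnk_eq_two_pow_sub_sum] at h
  exact (geomSum_lt_geomSum_iff_toColex_lt_toColex le_rfl).1 (lt_of_tsub_lt_tsub_left h)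

lemma exists_neg_nonneg_of_rnk_lt (h : rnk ρ < rnk ρ') : ∃ i, ρ' i < 0 ∧ 0 ≤ ρ i := by
  by_contra! hsat
  have hsub : satisfiedExponents ρ ⊆ satisfiedExponents ρ' :=
    satisfiedExponents_subset fun i hi => le_of_not_gt fun hi' => (hsat i hi').not_ge hi
  exact (toColex_satisfiedExponents_lt_of_rnk_lt h).not_ge (Colex.toColex_mono hsub)

theorem rwd_lt_rwd_of_rnk_lt {a : ℝ} (ha : 2 ≤ a) (hdiff : ∀ i, ρ' i - ρ i ≤ a)
    (hrnk : rnk ρ < rnk ρ') : rwd a ρ' < rwd a ρ := by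
  have hgap : ∑ k ∈ satisfiedExponents ρ', a ^ k + 1 ≤ ∑ k ∈ satisfiedExponents ρ, a ^ k :=
    geomSum_add_one_le_geomSum_of_toColex_lt ha (toColex_satisfiedExponents_lt_of_rnk_lt hrnk)
  have hmean : 𝔼 i, ρ' i - 𝔼 i, ρ i < a := by
    obtain ⟨i, hi', hi⟩ := exists_neg_nonneg_of_rnk_lt hrnk
    rw [← expect_sub_distrib]
    exact expect_lt (fun j _ => hdiff j) ⟨i, mem_univ i, by linarith⟩
  rw [rwd_eq_mul_sum_add_expect, rwd_eq_mul_sum_add_expect]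
  calc a * ∑ k ∈ satisfiedExponents ρ', a ^ k + 𝔼 i, ρ' i
      < a * (∑ k ∈ satisfiedExponents ρ', a ^ k + 1) + 𝔼 i, ρ i := by linarith
    _ ≤ a * ∑ k ∈ satisfiedExponents ρ, a ^ k + 𝔼 i, ρ i := by gcongr

theorem reward_argmax_minimizes_rank_general {a : ℝ} (ha : 2 ≤ a) {S : Set (Fin N → ℝ)}
    {ρstar : Fin N → ℝ} (hdiff : ∀ ρ ∈ S, ∀ i, ρstar i - ρ i ≤ a)
    (hmax : IsMaxOn (rwd a) S ρstar) : IsMinOn rnk S ρstar := fun ρ hρ =>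
  le_of_not_gt fun hlt => (rwd_lt_rwd_of_rnk_lt ha (hdiff ρ hρ) hlt).not_ge (hmax hρ)

end Robustness

/-- maximizing the rank-preserving reward over a finite set of admissible
robustness vectors selects a vector of minimal rank. -/
theorem reward_argmax_minimizes_rank {N : ℕ} (hN : 1 ≤ N) (a : ℝ) (ha : 2 < a)
    (S : Finset (Fin N → ℝ)) (hS : S.Nonempty)
    (hadm : ∀ ρ ∈ S, ∀ i, ρ i ∈ Set.Icc (-a / 2) (a / 2))
    (ρstar : Fin N → ℝ) (hmem : ρstar ∈ S)
    (hmax : ∀ ρ ∈ S, rwd a ρ ≤ rwd a ρstar) :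
    ∀ ρ ∈ S, rnk ρstar ≤ rnk ρ := by
  exact reward_argmax_minimizes_rank_general ha.le (S := (S : Set (Fin N → ℝ)))
    (fun ρ hρ i => by linarith [(hadm ρ hρ i).1, (hadm ρstar hmem i).2]) hmax
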